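/- Let C_0,…,C_k, R_1,…,R_k, (ρ_1,σ_1),…,(ρ_k,σ_k) form an admissible chain of length k, and write C_j = (a_j,b_j) for 0 ≤ j ≤ k. Then the sequences (a_j), (b_j) and (a_j − b_j) are strictly increasing in j: for every 1 ≤ j ≤ k one has a_{j−1} < a_j, b_{j−1} < b_j and a_{j−1} − b_{j−1} < a_j − b_j. In particular a_j ≥ 1, b_j ≥ 1 and a_j − b_j ≥ 1 for all 1 ≤ j ≤ k. -/

import Mathlib

open MvPolynomial

noncomputable section

variable {K : Type*} [Field K] [CharZero K]

/-- The support of `P` as a set of pairs `(i,j)` of exponents of `x^i y^j`. -/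
def Supp (P : MvPolynomial (Fin 2) K) : Set (ℕ × ℕ) :=
  {p | MvPolynomial.coeff (Finsupp.single 0 p.1 + Finsupp.single 1 p.2) P ≠ 0}

/-- The Jacobian bracket `[P,Q] = ∂ₓP ∂_yQ − ∂ₓQ ∂_yP`. -/
def Jb (P Q : MvPolynomial (Fin 2) K) : MvPolynomial (Fin 2) K :=
  pderiv 0 P * pderiv 1 Q - pderiv 0 Q * pderiv 1 P

/-- The `(ρ,σ)`-degree `v_{ρ,σ}(P)` (the maximum of `ρi+σj` on the support). -/
def wdeg (ρ σ : ℤ) (P : MvPolynomial (Fin 2) K) : ℤ :=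
  sSup {d : ℤ | ∃ p ∈ Supp P, d = ρ * (p.1 : ℤ) + σ * (p.2 : ℤ)}

/-- The support of the `(ρ,σ)`-leading form of `P`. -/
def LeadSupp (ρ σ : ℤ) (P : MvPolynomial (Fin 2) K) : Set (ℕ × ℕ) :=
  {p | p ∈ Supp P ∧ ρ * (p.1 : ℤ) + σ * (p.2 : ℤ) = wdeg ρ σ P}

/-- `P` is `(ρ,σ)`-homogeneous. -/
def IsHomog (ρ σ : ℤ) (P : MvPolynomial (Fin 2) K) : Prop :=
  ∀ p ∈ Supp P, ∀ q ∈ Supp P,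
    ρ * (p.1 : ℤ) + σ * (p.2 : ℤ) = ρ * (q.1 : ℤ) + σ * (q.2 : ℤ)

/-- `P` is a monomial: its support has at most one point. -/
def IsMonomial (P : MvPolynomial (Fin 2) K) : Prop := (Supp P).Subsingleton

/-- `e` is the point `en_{ρ,σ}(P)`: the point of the support of the leading form
with largest second coordinate. -/
def IsEn (ρ σ : ℤ) (P : MvPolynomial (Fin 2) K) (e : ℕ × ℕ) : Prop :=
  e ∈ LeadSupp ρ σ P ∧ ∀ q ∈ LeadSupp ρ σ P, q.2 ≤ e.2

/-- `e` is the point `st_{ρ,σ}(P)`: the point of the support of the leading form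
with smallest second coordinate. -/
def IsSt (ρ σ : ℤ) (P : MvPolynomial (Fin 2) K) (e : ℕ × ℕ) : Prop :=
  e ∈ LeadSupp ρ σ P ∧ ∀ q ∈ LeadSupp ρ σ P, e.2 ≤ q.2

/-- An admissible chain of length `k`: points `C 0, …, C k`, polynomials
`Rp 1, …, Rp k` and directions `dir 1, …, dir k` satisfying conditions
(i)–(viii) of Definition "cadena admisible". -/
structure AdmChain (K : Type*) [Field K] [CharZero K] (k : ℕ) where
  C : ℕ → ℕ × ℕ
  Rp : ℕ → MvPolynomial (Fin 2) K
  dir : ℕ → ℤ × ℤ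
  hdir : ∀ j, 1 ≤ j → j ≤ k →
    Int.gcd (dir j).1 (dir j).2 = 1 ∧ 0 < (dir j).1 ∧ (dir j).1 + (dir j).2 < 0
  hC0 : ∃ l : ℕ, 1 ≤ l ∧ C 0 = (l, 0)
  hincr : ∀ j, 2 ≤ j → j ≤ k →
    0 < (dir (j - 1)).1 * (dir j).2 - (dir (j - 1)).2 * (dir j).1
  hhom : ∀ j, 1 ≤ j → j ≤ k → IsHomog (dir j).1 (dir j).2 (Rp j)
  hmono : ∀ j, 1 ≤ j → j ≤ k → ¬ IsMonomial (Rp j)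
  hst : ∀ j, 1 ≤ j → j ≤ k → IsSt (dir j).1 (dir j).2 (Rp j) (C (j - 1))
  hen : ∀ j, 1 ≤ j → j ≤ k → IsEn (dir j).1 (dir j).2 (Rp j) (C j)
  hdiag : ∀ j, 1 ≤ j → j ≤ k → (C j).2 < (C j).1
  hval : ∀ j, 1 ≤ j → j ≤ k →
    (dir j).1 ≤ (dir j).1 * ((C j).1 : ℤ) + (dir j).2 * ((C j).2 : ℤ)
  hG : ∀ j, 1 ≤ j → j ≤ k → ∃ (G : MvPolynomial (Fin 2) K) (i : ℕ), 1 ≤ i ∧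
    IsHomog (dir j).1 (dir j).2 G ∧ Jb G (Rp j) = (Rp j) ^ i

/-- A point of `ℕ × ℕ` is a possible `A₀′` if it is the end point of some
admissible chain. -/
def PossibleA0 (K : Type*) [Field K] [CharZero K] (p : ℕ × ℕ) : Prop :=
  ∃ (k : ℕ) (ch : AdmChain K k), ch.C k = p

/-!
On the edge of `R` from `s = st(R)` to `e = en(R)` the form `ρ a + σ b` is constant, so the
increments satisfy `ρ Δa = -σ Δb`, that is `ρ Δ(a - b) = -(ρ + σ) Δb`. Since `R` has at least two
points on this edge, `Δb > 0`; then `ρ > 0 > ρ + σ` forces `Δ(a - b) > 0`, and `Δa > Δb > 0`.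
-/

theorem sub_lt_sub_of_mul_add_mul_eq {R : Type*} [CommRing R] [LinearOrder R]
    [IsStrictOrderedRing R] {ρ σ a b a' b' : R} (hρ : 0 < ρ) (hρσ : ρ + σ < 0)
    (h : ρ * a + σ * b = ρ * a' + σ * b') (hb : b < b') : a - b < a' - b' := by
  have key : ρ * ((a' - b') - (a - b)) = -(ρ + σ) * (b' - b) := by linear_combination -h
  have pos : 0 < ρ * ((a' - b') - (a - b)) :=
    key ▸ mul_pos (neg_pos.2 hρσ) (sub_pos.2 hb)
  exact sub_pos.1 (pos_of_mul_pos_right pos hρ.le)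

section Edge

variable {F : Type*} [Field F] {ρ σ : ℤ} {P : MvPolynomial (Fin 2) F} {s e : ℕ × ℕ}

theorem IsHomog.leadSupp_eq_supp (h : IsHomog ρ σ P) : LeadSupp ρ σ P = Supp P := by
  refine Set.Subset.antisymm (fun p hp ↦ hp.1) fun p hp ↦ ⟨hp, ?_⟩
  have degrees : {d : ℤ | ∃ q ∈ Supp P, d = ρ * (q.1 : ℤ) + σ * (q.2 : ℤ)} =
      {ρ * (p.1 : ℤ) + σ * (p.2 : ℤ)} :=
    Set.Subset.antisymm (fun _ ⟨q, hq, hd⟩ ↦ hd.trans (h q hq p hp)) fun _ hd ↦ ⟨p, hp, hd⟩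
  rw [wdeg, degrees, csSup_singleton]

theorem injOn_snd_leadSupp (hρ : ρ ≠ 0) : Set.InjOn Prod.snd (LeadSupp ρ σ P) := by
  intro p hp q hq hpq
  have weights : ρ * (p.1 : ℤ) + σ * (p.2 : ℤ) = ρ * (q.1 : ℤ) + σ * (q.2 : ℤ) :=
    hp.2.trans hq.2.symm
  rw [hpq, add_left_inj] at weights
  exact Prod.ext (Nat.cast_injective (mul_left_cancel₀ hρ weights)) hpq

theorem IsSt.snd_lt_snd_of_isEn (hs : IsSt ρ σ P s) (he : IsEn ρ σ P e) (hρ : ρ ≠ 0)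
    (hP : (LeadSupp ρ σ P).Nontrivial) : s.2 < e.2 := by
  obtain ⟨p, hp, q, hq, hpq⟩ := hP
  have snd_ne : p.2 ≠ q.2 := (injOn_snd_leadSupp hρ).ne hp hq hpq
  have := hs.2 p hp
  have := hs.2 q hq
  have := he.2 p hp
  have := he.2 q hq
  omega

theorem IsSt.sub_lt_sub_of_isEn (hs : IsSt ρ σ P s) (he : IsEn ρ σ P e) (hρ : 0 < ρ)
    (hρσ : ρ + σ < 0) (hP : (LeadSupp ρ σ P).Nontrivial) :
    (s.1 : ℤ) - (s.2 : ℤ) < (e.1 : ℤ) - (e.2 : ℤ) :=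
  sub_lt_sub_of_mul_add_mul_eq hρ hρσ (hs.1.2.trans he.1.2.symm)
    (Nat.cast_lt.2 (hs.snd_lt_snd_of_isEn he hρ.ne' hP))

end Edge

theorem stmt18_general {F : Type*} [Field F] {k : ℕ} {C : ℕ → ℕ × ℕ}
    {R : ℕ → MvPolynomial (Fin 2) F} {ρ σ : ℕ → ℤ}
    (hC0 : (C 0).2 ≤ (C 0).1)
    (hdir : ∀ j, 1 ≤ j → j ≤ k → 0 < ρ j ∧ ρ j + σ j < 0)
    (hR : ∀ j, 1 ≤ j → j ≤ k → (LeadSupp (ρ j) (σ j) (R j)).Nontrivial)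
    (hst : ∀ j, 1 ≤ j → j ≤ k → IsSt (ρ j) (σ j) (R j) (C (j - 1)))
    (hen : ∀ j, 1 ≤ j → j ≤ k → IsEn (ρ j) (σ j) (R j) (C j)) :
    ∀ j, 1 ≤ j → j ≤ k →
      ((C (j - 1)).1 < (C j).1 ∧ (C (j - 1)).2 < (C j).2 ∧
        ((C (j - 1)).1 : ℤ) - ((C (j - 1)).2 : ℤ) < ((C j).1 : ℤ) - ((C j).2 : ℤ)) ∧
      (1 ≤ (C j).1 ∧ 1 ≤ (C j).2 ∧ (C j).2 < (C j).1) := by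
  have snd_lt (j) (h1 : 1 ≤ j) (hk : j ≤ k) : (C (j - 1)).2 < (C j).2 :=
    (hst j h1 hk).snd_lt_snd_of_isEn (hen j h1 hk) (hdir j h1 hk).1.ne' (hR j h1 hk)
  have sub_lt (j) (h1 : 1 ≤ j) (hk : j ≤ k) :
      ((C (j - 1)).1 : ℤ) - ((C (j - 1)).2 : ℤ) < ((C j).1 : ℤ) - ((C j).2 : ℤ) :=
    (hst j h1 hk).sub_lt_sub_of_isEn (hen j h1 hk) (hdir j h1 hk).1 (hdir j h1 hk).2 (hR j h1 hk)
  have snd_le_fst (j) (hk : j ≤ k) : (C j).2 ≤ (C j).1 := by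
    induction j with
    | zero => exact hC0
    | succ j ih =>
      have := ih (by omega)
      have := sub_lt (j + 1) (by omega) hk
      rw [Nat.add_sub_cancel] at this
      omega
  intro j h1 hk
  have := snd_lt j h1 hk
  have := sub_lt j h1 hk
  have := snd_le_fst (j - 1) (by omega)
  omega

/-- Remark "los B_is crecen": along an admissible chain the sequences `a_j`, `b_j`
and `a_j − b_j` are strictly increasing, and `a_j, b_j, a_j − b_j ≥ 1` for
`1 ≤ j ≤ k`. -/
theorem stmt18 (K : Type*) [Field K] [CharZero K] (k : ℕ) (ch : AdmChain K k) :
    ∀ j, 1 ≤ j → j ≤ k →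
      ((ch.C (j - 1)).1 < (ch.C j).1 ∧
       (ch.C (j - 1)).2 < (ch.C j).2 ∧
       ((ch.C (j - 1)).1 : ℤ) - ((ch.C (j - 1)).2 : ℤ)
         < ((ch.C j).1 : ℤ) - ((ch.C j).2 : ℤ)) ∧
      (1 ≤ (ch.C j).1 ∧ 1 ≤ (ch.C j).2 ∧ (ch.C j).2 < (ch.C j).1) := by
  obtain ⟨l, -, hl⟩ := ch.hC0
  exact stmt18_general (hl ▸ l.zero_le) (fun j h1 hk ↦ (ch.hdir j h1 hk).2)
    (fun j h1 hk ↦ (ch.hhom j h1 hk).leadSupp_eq_supp ▸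
      Set.not_subsingleton_iff.1 (ch.hmono j h1 hk)) ch.hst ch.hen

end
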